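/- Let S and P be symmetric involutions of an n-dimensional real inner product space with dim E₊(S) = r ≥ 2, and define A₋ := n² + (tr S)² − (tr P)² − (tr(SP))² + tr(SPSP) − n + 2n·tr(S) − 2·tr(P)·tr(SP). Then A₋ = 0 if and only if there exists ε ∈ {−1, 1} such that E₊(S) is contained in the ε-eigenspace E_ε(P) of P. -/

import Mathlib

open scoped RealInnerProductSpace
open Module

theorem sum_aux {r : ℕ} (b : Fin r → ℝ) (hr : 2 ≤ r) (hb : ∀ i, b i ^ 2 ≤ 1)
    (h : (r : ℝ) ^ 2 - r + ∑ i, b i * b i - (∑ i, b i) ^ 2 = 0) :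
    ∃ ε : ℝ, (ε = -1 ∨ ε = 1) ∧ ∀ i, b i = ε := by
  have hnn : ∀ i j, 0 ≤ (if i = j then 0 else (1 - b i * b j)) := by
    intro i j
    split_ifs
    · exact le_rfl
    · nlinarith [hb i, hb j, sq_nonneg (b i - b j)]
  have e : ∑ i, ∑ j, (if i = j then 0 else (1 - b i * b j)) = 0 := by
    refine Eq.trans ?_ h
    have : ∀ i j, (if i = j then 0 else (1 - b i * b j))
        = 1 - b i * b j - (if i = j then 1 - b i * b j else 0) := by
      intro i j
      split_ifs <;> ring
    rw [Finset.sum_congr rfl fun i _ => Finset.sum_congr rfl fun j _ => this i j]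
    simp only [Finset.sum_sub_distrib, Finset.sum_ite_eq, Finset.mem_univ, if_true,
      ← Finset.mul_sum, ← Finset.sum_mul]
    simp
    ring
  have e2 : ∀ i j, i ≠ j → b i * b j = 1 := by
    intro i j hij
    have h1 := (Finset.sum_eq_zero_iff_of_nonneg
      (fun i _ => Finset.sum_nonneg (fun j _ => hnn i j))).1 e i (Finset.mem_univ _)
    have h2 := (Finset.sum_eq_zero_iff_of_nonneg (fun j _ => hnn i j)).1 h1 j (Finset.mem_univ _)
    rw [if_neg hij] at h2
    linarith
  have e3 : ∀ i j, i ≠ j → b i = b j := by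
    intro i j hij
    have := e2 i j hij
    have : (b i - b j) ^ 2 = 0 := by nlinarith [hb i, hb j, sq_nonneg (b i - b j)]
    have := pow_eq_zero_iff (two_ne_zero) |>.1 this
    linarith
  let i0 : Fin r := ⟨0, by omega⟩
  let i1 : Fin r := ⟨1, by omega⟩
  have h01 : i0 ≠ i1 := by simp [i0, i1]
  refine ⟨b i0, ?_, ?_⟩
  · have h1 := e2 _ _ h01
    rw [← e3 _ _ h01] at h1
    rcases mul_self_eq_one_iff.1 h1 with h | h
    · exact Or.inr h
    · exact Or.inl h
  · intro i
    by_cases hi : i = i0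
    · rw [hi]
    · exact e3 _ _ hi

/-- Let `S` and `P` be symmetric involutions of an `n`-dimensional real inner product space
with `dim E₊(S) = r ≥ 2`, and define
`A₋ := n² + (tr S)² − (tr P)² − (tr(SP))² + tr(SPSP) − n + 2n·tr(S) − 2·tr(P)·tr(SP)`.
Then `A₋ = 0` if and only if there exists `ε ∈ {−1, 1}` such that `E₊(S)` is contained in
the `ε`-eigenspace `E_ε(P)` of `P`. -/
theorem A_minus_eq_zero_iff {V : Type*} [NormedAddCommGroup V]
    [InnerProductSpace ℝ V] [FiniteDimensional ℝ V] (n r : ℕ)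
    (hn : finrank ℝ V = n) (S P : V →ₗ[ℝ] V)
    (hSsym : ∀ x y : V, ⟪S x, y⟫ = ⟪x, S y⟫) (hSinv : ∀ x : V, S (S x) = x)
    (hPsym : ∀ x y : V, ⟪P x, y⟫ = ⟪x, P y⟫) (hPinv : ∀ x : V, P (P x) = x)
    (hr : finrank ℝ ↥(Module.End.eigenspace S (1 : ℝ)) = r) (hr2 : 2 ≤ r) :
    ((n : ℝ) ^ 2 + (LinearMap.trace ℝ V S) ^ 2 - (LinearMap.trace ℝ V P) ^ 2
        - (LinearMap.trace ℝ V (S ∘ₗ P)) ^ 2 + LinearMap.trace ℝ V (S ∘ₗ P ∘ₗ S ∘ₗ P)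
        - (n : ℝ) + 2 * (n : ℝ) * LinearMap.trace ℝ V S
        - 2 * LinearMap.trace ℝ V P * LinearMap.trace ℝ V (S ∘ₗ P) = 0) ↔
      ∃ ε : ℝ, (ε = -1 ∨ ε = 1) ∧
        Module.End.eigenspace S (1 : ℝ) ≤ Module.End.eigenspace P ε := by
  set E := Module.End.eigenspace S (1 : ℝ) with hE
  have memE : ∀ x, x ∈ E ↔ S x = x := fun x => by
    rw [hE, Module.End.mem_eigenspace_iff, one_smul]
  let K : V →ₗ[ℝ] E := LinearMap.codRestrict E ((1 / 2 : ℝ) • (LinearMap.id + S)) (by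
    intro x
    rw [memE]
    simp [hSinv, add_comm])
  have hK : ∀ x, (K x : V) = (1 / 2 : ℝ) • (x + S x) := fun x => by simp [K]
  have hKE : ∀ x : E, K (x : V) = x := by
    intro x
    apply Subtype.ext
    rw [hK, (memE _).1 x.2, ← two_smul ℝ (x : V), smul_smul]
    norm_num
  have hKin : ∀ (x : V) (y : E), ⟪(K x : V), (y : V)⟫ = ⟪x, (y : V)⟫ := by
    intro x y
    rw [hK, inner_smul_left, inner_add_left, hSsym, (memE _).1 y.2]
    simp
    ring
  let T : E →ₗ[ℝ] E := K ∘ₗ P ∘ₗ E.subtype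
  have hTa : ∀ x : E, T x = K (P x) := fun x => rfl
  have hTin : ∀ x y : E, ⟪T x, y⟫ = ⟪P (x : V), (y : V)⟫ := fun x y => hKin _ _
  have hTsym : T.IsSymmetric := by
    intro x y
    rw [hTin, real_inner_comm, ← hPsym, ← hTin, real_inner_comm]
  have hSQ : S = (2 : ℝ) • (E.subtype ∘ₗ K) - LinearMap.id := by
    ext x
    simp [hK]
  have hPP : P ∘ₗ P = LinearMap.id := by ext x; simp [hPinv]
  set Q : V →ₗ[ℝ] V := E.subtype ∘ₗ K with hQ
  have trQ : LinearMap.trace ℝ V Q = r := by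
    rw [hQ, LinearMap.trace_comp_comm']
    have : K ∘ₗ E.subtype = LinearMap.id := by ext x; simp [hKE]
    rw [this, LinearMap.trace_id, hr]
  have trQP : LinearMap.trace ℝ V (Q ∘ₗ P) = LinearMap.trace ℝ E T := by
    rw [hQ, LinearMap.comp_assoc, LinearMap.trace_comp_comm']
    rfl
  have trQPQP : LinearMap.trace ℝ V (Q ∘ₗ P ∘ₗ Q ∘ₗ P) = LinearMap.trace ℝ E (T ∘ₗ T) := by
    rw [hQ, LinearMap.comp_assoc, LinearMap.trace_comp_comm']
    rfl
  have trS : LinearMap.trace ℝ V S = 2 * r - n := by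
    rw [hSQ, map_sub, map_smul, trQ, LinearMap.trace_id, hn, smul_eq_mul]
  have trSP : LinearMap.trace ℝ V (S ∘ₗ P)
      = 2 * LinearMap.trace ℝ E T - LinearMap.trace ℝ V P := by
    rw [hSQ, LinearMap.sub_comp, LinearMap.smul_comp, map_sub, map_smul, trQP, smul_eq_mul,
      LinearMap.id_comp]
  have trSPSP : LinearMap.trace ℝ V (S ∘ₗ P ∘ₗ S ∘ₗ P)
      = 4 * LinearMap.trace ℝ E (T ∘ₗ T) - 4 * r + n := by
    have e1 : S ∘ₗ P ∘ₗ S ∘ₗ P = (4 : ℝ) • (Q ∘ₗ P ∘ₗ Q ∘ₗ P) - (2 : ℝ) • Q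
        - (2 : ℝ) • (P ∘ₗ Q ∘ₗ P) + LinearMap.id := by
      rw [hSQ]
      ext x
      simp only [LinearMap.comp_apply, LinearMap.sub_apply, LinearMap.smul_apply,
        LinearMap.id_apply, LinearMap.add_apply, map_sub, map_smul, hPinv]
      module
    have e2 : LinearMap.trace ℝ V (P ∘ₗ Q ∘ₗ P) = r := by
      rw [LinearMap.trace_comp_comm', LinearMap.comp_assoc, hPP, LinearMap.comp_id, trQ]
    rw [e1, map_add, map_sub, map_sub, map_smul, map_smul, map_smul, e2, trQ, trQPQP,
      LinearMap.trace_id, hn]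
    simp only [smul_eq_mul]
    ring
  rw [trSPSP, trSP, trS]
  have hPn : ∀ x y : V, ⟪P x, P y⟫ = ⟪x, y⟫ := fun x y => by rw [hPsym, hPinv]
  constructor
  · intro h
    let v := hTsym.eigenvectorBasis hr
    let b := hTsym.eigenvalues hr
    have hv : ∀ i, T (v i) = b i • v i := fun i => hTsym.apply_eigenvectorBasis hr i
    have hvv : ∀ i, ⟪v i, v i⟫ = (1 : ℝ) := fun i => by
      rw [real_inner_self_eq_norm_sq, v.norm_eq_one]; norm_num
    have t1 : LinearMap.trace ℝ E T = ∑ i, b i := by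
      rw [LinearMap.trace_eq_sum_inner T v]
      refine Finset.sum_congr rfl fun i _ => ?_
      rw [hv, inner_smul_right, hvv, mul_one]
    have t2 : LinearMap.trace ℝ E (T ∘ₗ T) = ∑ i, b i * b i := by
      rw [LinearMap.trace_eq_sum_inner _ v]
      refine Finset.sum_congr rfl fun i _ => ?_
      rw [LinearMap.comp_apply, hv, map_smul, hv, inner_smul_right, inner_smul_right, hvv, mul_one]
    have hb : ∀ i, b i ^ 2 ≤ 1 := by
      intro i
      have h1 : b i = ⟪P (v i : V), (v i : V)⟫ := by
        rw [← hTin, hv, inner_smul_left, hvv]; simp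
      have h2 : ⟪(v i : V), (v i : V)⟫ = (1 : ℝ) := hvv i
      have h3 := real_inner_mul_inner_self_le (P (v i : V)) (v i : V)
      rw [hPn, h2, ← h1] at h3
      nlinarith
    obtain ⟨ε, hε, hbe⟩ := sum_aux b hr2 hb (by rw [← t1, ← t2]; linarith)
    refine ⟨ε, hε, ?_⟩
    have hT : T = ε • LinearMap.id := by
      apply v.toBasis.ext
      intro i
      simp [hv, hbe]
    intro x hx
    rw [Module.End.mem_eigenspace_iff]
    have h1 := hTin ⟨x, hx⟩ ⟨x, hx⟩
    rw [hT] at h1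
    simp only [LinearMap.smul_apply, LinearMap.id_apply, inner_smul_left] at h1
    have h1' : ε * ⟪x, x⟫ = ⟪P x, x⟫ := h1
    have h2 : ⟪P x - ε • x, P x - ε • x⟫ = (0 : ℝ) := by
      rw [inner_sub_left, inner_sub_right, inner_sub_right, hPn]
      simp only [inner_smul_left, inner_smul_right]
      rw [real_inner_comm (P x) x, ← h1']
      rcases hε with rfl | rfl <;> simp
    exact sub_eq_zero.1 (inner_self_eq_zero.1 h2)
  · rintro ⟨ε, hε, hle⟩
    have hT : T = ε • LinearMap.id := by
      refine LinearMap.ext fun x => ?_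
      rw [hTa, Module.End.mem_eigenspace_iff.1 (hle x.2), map_smul, hKE]
      rfl
    have hTT : T ∘ₗ T = LinearMap.id := by
      rw [hT]
      refine LinearMap.ext fun x => ?_
      rcases hε with rfl | rfl <;> simp
    rw [hTT, hT, map_smul, LinearMap.trace_id, hr, smul_eq_mul]
    rcases hε with rfl | rfl <;> ring
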